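/- For every positive integer k and positive integer d there is a constant C depending only on k and d with the following property. Let p₁, …, p_k : ℝⁿ → ℝ be multilinear polynomials of degree at most d with |p_j|₂ ≤ 1 for all j and Inf_i(p_j) ≤ τ for all i and j, where 0 < τ. Define A(p₁, …, p_k) := Σ_{S ⊆ {1,…,k}} (−1)^{|S|}·(∏_{i∈S} p_i)·L(∏_{i∉S} p_i), where L(q) denotes the unique multilinear polynomial agreeing with q on {−1,1}ⁿ. Then |A(p₁, …, p_k)|₂ ≤ C·τ^{k/4}. -/

import Mathlib

open MeasureTheory ProbabilityTheory

/-- The standard Gaussian measure on `ℝⁿ`. -/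
noncomputable def stdGaussian (n : ℕ) : Measure (Fin n → ℝ) :=
  Measure.pi fun _ => gaussianReal 0 1

/-- The Gaussian `L²` norm of a polynomial on `ℝⁿ`. -/
noncomputable def gaussL2 {n : ℕ} (p : MvPolynomial (Fin n) ℝ) : ℝ :=
  Real.sqrt (∫ x, (MvPolynomial.eval x p) ^ 2 ∂(stdGaussian n))

/-- A polynomial is multilinear if it has degree at most `1` in each variable. -/
def IsMultilinear {n : ℕ} (q : MvPolynomial (Fin n) ℝ) : Prop :=
  ∀ j, q.degreeOf j ≤ 1

/-- The `i`-th influence `Inf_i(q) = E_X[(∂q/∂x_i)(X)²]`. -/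
noncomputable def influence {n : ℕ} (i : Fin n) (q : MvPolynomial (Fin n) ℝ) : ℝ :=
  ∫ x, (MvPolynomial.eval x (MvPolynomial.pderiv i q)) ^ 2 ∂(stdGaussian n)

/-- `L(q)`: the multilinearization of `q`, the unique multilinear polynomial agreeing with `q`
on `{-1, 1}ⁿ`, obtained by reducing each exponent mod `2`. -/
noncomputable def multilinearize {n : ℕ} (q : MvPolynomial (Fin n) ℝ) :
    MvPolynomial (Fin n) ℝ :=
  ∑ a ∈ q.support,
    MvPolynomial.monomial (Finsupp.mapRange (· % 2) (Nat.zero_mod 2) a) (q.coeff a)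

/-- The multilinear error term
`A(p₁, …, p_k) = ∑_{S ⊆ [k]} (-1)^{|S|} (∏_{i ∈ S} pᵢ) · L(∏_{i ∉ S} pᵢ)`. -/
noncomputable def AError {n k : ℕ} (p : Fin k → MvPolynomial (Fin n) ℝ) :
    MvPolynomial (Fin n) ℝ :=
  ∑ S : Finset (Fin k),
    (-1 : MvPolynomial (Fin n) ℝ) ^ S.card * (∏ i ∈ S, p i) *
      multilinearize (∏ i ∈ Sᶜ, p i)

/-!
By multilinearity, `AError p` is a linear combination of the error terms of `k`-tuples of squarefree
monomials, so `gaussL2 (AError p) ^ 2` is a sum over `2k`-tuples of vertex sets of a product of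
coefficients times the Gaussian covariance of two monomial error terms. The covariance vanishes when
some vertex lies in an odd number of the sets, and also when every vertex of one of the sets lies in
at most two of them: then the alternating sum over `S` cancels in pairs. In the surviving tuples
every set contains a vertex of degree at least four. Splitting each set into its vertices of degree
at least four and the others, a vertex-by-vertex Hölder inequality with exponent `4` on the first
part and `2` on the second bounds the fourth power of the sum by a product over the `2k` slots. Each
slot contributes `∑ b, (∑ u, c (b ∪ u) ^ 2) ^ 2` over nonempty `b`, and since the inner sum is at
most the influence of a vertex of `b`, this is `O(τ)`.
-/

section TensorizedHolder

open Finset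

variable {ι V : Type*} [Fintype ι] [DecidableEq ι] [DecidableEq V]

theorem add_pow_succ_le_of_pow_mul_le {x y M K : ℝ} (hx : 0 ≤ x) (hy : 0 ≤ y) (hM : 0 ≤ M)
    (hK : 0 ≤ K) (hyM : y ≤ K * M) {q : ℕ} (hxy : x ^ q * y ≤ K * M ^ (q + 1)) :
    (x + y) ^ (q + 1) ≤ x ^ (q + 1) + (1 + K) ^ (q + 1) * M ^ (q + 1) := by
  rcases le_total x M with hxM | hMx
  · calc (x + y) ^ (q + 1) ≤ (M + K * M) ^ (q + 1) := by gcongr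
      _ = (1 + K) ^ (q + 1) * M ^ (q + 1) := by rw [← mul_pow]; ring
      _ ≤ _ := le_add_of_nonneg_left (by positivity)
  · rcases hx.eq_or_lt with rfl | hx
    · simp [le_antisymm hMx hM, le_antisymm (hyM.trans (mul_nonpos_of_nonneg_of_nonpos hK hMx)) hy]
    set s : ℝ := (M / x) ^ (q + 1) with hs
    have hs0 : 0 ≤ s := by positivity
    have hs1 : s ≤ 1 := pow_le_one₀ (by positivity) (div_le_one_of_le₀ hMx hx.le)
    have hxs : x ^ (q + 1) * s = M ^ (q + 1) := by rw [hs, ← mul_pow, mul_div_cancel₀ _ hx.ne']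
    have hy' : y ≤ x * (K * s) := by
      refine le_of_mul_le_mul_left ?_ (pow_pos hx q)
      calc x ^ q * y ≤ K * (x ^ (q + 1) * s) := by rwa [hxs]
        _ = x ^ q * (x * (K * s)) := by ring
    have hchord : (1 + K * s) ^ (q + 1) ≤ 1 + s * (1 + K) ^ (q + 1) := by
      have h := (convexOn_pow (q + 1)).2 (Set.mem_Ici.2 zero_le_one)
        (Set.mem_Ici.2 (add_nonneg zero_le_one hK)) (sub_nonneg.2 hs1) hs0 (sub_add_cancel 1 s)
      simp only [smul_eq_mul, one_pow, mul_one] at h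
      calc (1 + K * s) ^ (q + 1) = (1 - s + s * (1 + K)) ^ (q + 1) := by ring
        _ ≤ 1 + s * (1 + K) ^ (q + 1) := by linarith
    calc (x + y) ^ (q + 1) ≤ (x + x * (K * s)) ^ (q + 1) := by gcongr
      _ = x ^ (q + 1) * (1 + K * s) ^ (q + 1) := by rw [← mul_pow]; ring
      _ ≤ x ^ (q + 1) * (1 + s * (1 + K) ^ (q + 1)) := by gcongr
      _ = x ^ (q + 1) + (1 + K) ^ (q + 1) * (x ^ (q + 1) * s) := by ring
      _ = _ := by rw [hxs]

/-- The product that takes its factors from `b` on `J` and from `a` off `J`. -/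
def splitProd {R : Type*} [CommMonoid R] (a b : ι → R) (J : Finset ι) : R :=
  (∏ j ∈ J, b j) * ∏ j ∈ Jᶜ, a j

theorem splitProd_nonneg {a b : ι → ℝ} (ha : 0 ≤ a) (hb : 0 ≤ b) (J : Finset ι) :
    0 ≤ splitProd a b J :=
  mul_nonneg (prod_nonneg fun j _ => hb j) (prod_nonneg fun j _ => ha j)

theorem splitProd_eq_prod_ite {R : Type*} [CommMonoid R] (a b : ι → R) (J : Finset ι) :
    splitProd a b J = ∏ j, if j ∈ J then b j else a j := by
  simp [splitProd, prod_ite, filter_notMem_eq_sdiff, compl_eq_univ_sdiff]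

theorem splitProd_empty_mul {R : Type*} [CommMonoid R] (a b : ι → R) {J : Finset ι} {j : ι}
    (hj : j ∈ J) :
    splitProd a b ∅ * splitProd a b J = splitProd a b {j} * splitProd a b (J.erase j) := by
  simp only [splitProd, prod_empty, one_mul, compl_empty, prod_singleton, compl_erase]
  rw [prod_insert (by simpa using hj), ← mul_prod_erase J b hj,
    ← mul_prod_erase univ a (mem_univ j), compl_eq_univ_sdiff {j}, sdiff_singleton_eq_erase]
  ac_rfl

/-- The elements of `J` are moved one at a time into copies of the product over `∅`, so that all
`q + 1` factors become products over nonempty sets. -/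
theorem splitProd_empty_pow_mul_le {a b : ι → ℝ} (ha : 0 ≤ a) (hb : 0 ≤ b) {M : ℝ}
    (hM : ∀ J : Finset ι, J.Nonempty → splitProd a b J ≤ M) {q : ℕ} {J : Finset ι} (hJ : q < #J) :
    splitProd a b ∅ ^ q * splitProd a b J ≤ M ^ (q + 1) := by
  have h0 := splitProd_nonneg ha hb
  induction q generalizing J with
  | zero => simpa using hM J (card_pos.1 hJ)
  | succ q ih =>
    obtain ⟨j, hj⟩ : J.Nonempty := card_pos.1 (by lia)
    calc splitProd a b ∅ ^ (q + 1) * splitProd a b J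
        = splitProd a b {j} * (splitProd a b ∅ ^ q * splitProd a b (J.erase j)) := by
          rw [pow_succ, mul_assoc, splitProd_empty_mul a b hj]; ring
      _ ≤ M * M ^ (q + 1) :=
          mul_le_mul (hM _ (singleton_nonempty j)) (ih (by rw [card_erase_of_mem hj]; lia))
            (mul_nonneg (pow_nonneg (h0 _) _) (h0 _)) ((h0 _).trans (hM _ (singleton_nonempty j)))
      _ = M ^ (q + 1 + 1) := (pow_succ' _ _).symm

variable (ι) in
/-- The factor charged per vertex in the tensorized Hölder inequality with exponent `q` for
`ι`-indexed families. -/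
noncomputable def vertexWeight (q : ℕ) : ℝ := (1 + 2 ^ Fintype.card ι) ^ q

omit [DecidableEq ι] in
theorem one_le_vertexWeight (q : ℕ) : 1 ≤ vertexWeight ι q :=
  one_le_pow₀ (le_add_of_nonneg_right (by positivity))

omit [DecidableEq ι] in
theorem vertexWeight_nonneg (q : ℕ) : 0 ≤ vertexWeight ι q :=
  zero_le_one.trans (one_le_vertexWeight q)

theorem prod_pow_add_vertexWeight_mul_pow (a b : ι → ℝ) (q : ℕ) :
    ∏ j, (a j ^ q + vertexWeight ι q * b j ^ q)
      = ∑ J : Finset ι, vertexWeight ι q ^ #J * splitProd a b J ^ q := by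
  simp only [add_comm (a _ ^ q), Fintype.prod_add, splitProd, mul_pow, prod_mul_distrib, prod_const,
    prod_pow, mul_assoc]

theorem sum_splitProd_pow_succ_le {a b : ι → ℝ} (ha : 0 ≤ a) (hb : 0 ≤ b) {M : ℝ} (hM0 : 0 ≤ M)
    (hM : ∀ J : Finset ι, J.Nonempty → splitProd a b J ≤ M) (q : ℕ) :
    (∑ J : Finset ι with #J = 0 ∨ q + 1 ≤ #J, splitProd a b J) ^ (q + 1)
      ≤ splitProd a b ∅ ^ (q + 1) + vertexWeight ι (q + 1) * M ^ (q + 1) := by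
  have h0 := splitProd_nonneg ha hb
  set L : Finset (Finset ι) := {J | q + 1 ≤ #J} with hL
  have hL_card {J : Finset ι} (hJ : J ∈ L) : q < #J := (mem_filter.1 hJ).2
  have hsplit : ({J | #J = 0 ∨ q + 1 ≤ #J} : Finset (Finset ι)) = insert ∅ L := by
    ext J; simp [hL]
  have hbound (x : ℝ) (hx : 0 ≤ x) (f : Finset ι → ℝ) (hf : ∀ J ∈ L, f J ≤ x) :
      ∑ J ∈ L, f J ≤ 2 ^ Fintype.card ι * x := by
    have hcard : (#L : ℝ) ≤ 2 ^ Fintype.card ι := by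
      exact_mod_cast (card_le_univ L).trans_eq Fintype.card_finset
    exact (sum_le_card_nsmul L f x hf).trans (by rw [nsmul_eq_mul]; gcongr)
  have hsmall : ∑ J ∈ L, splitProd a b J ≤ 2 ^ Fintype.card ι * M :=
    hbound M hM0 _ fun J hJ => hM J (card_pos.1 (Nat.zero_lt_of_lt (hL_card hJ)))
  have hlarge : splitProd a b ∅ ^ q * ∑ J ∈ L, splitProd a b J
      ≤ 2 ^ Fintype.card ι * M ^ (q + 1) := by
    rw [mul_sum]
    exact hbound _ (by positivity) _ fun J hJ => splitProd_empty_pow_mul_le ha hb hM (hL_card hJ)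
  rw [hsplit, sum_insert (by simp [hL])]
  exact add_pow_succ_le_of_pow_mul_le (h0 _) (sum_nonneg fun J _ => h0 J) hM0 (by positivity)
    hsmall hlarge

theorem sum_splitProd_pow_le {a b : ι → ℝ} (ha : 0 ≤ a) (hb : 0 ≤ b) {q : ℕ} (hq : q ≠ 0) :
    (∑ J : Finset ι with #J = 0 ∨ q ≤ #J, splitProd a b J) ^ q
      ≤ ∏ j, (a j ^ q + vertexWeight ι q * b j ^ q) := by
  obtain ⟨q, rfl⟩ := Nat.exists_eq_succ_of_ne_zero hq
  have h0 (J) : 0 ≤ splitProd a b J ^ (q + 1) := pow_nonneg (splitProd_nonneg ha hb J) _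
  set S : ℝ := ∑ J : Finset ι with J ≠ ∅, splitProd a b J ^ (q + 1) with hS
  have hS0 : 0 ≤ S := sum_nonneg fun J _ => h0 J
  obtain ⟨M, hM0, hMS⟩ : ∃ M : ℝ, 0 ≤ M ∧ M ^ (q + 1) = S :=
    ⟨S ^ ((q + 1 : ℕ) : ℝ)⁻¹, by positivity, Real.rpow_inv_natCast_pow hS0 hq⟩
  have hM (J : Finset ι) (hJ : J.Nonempty) : splitProd a b J ≤ M := by
    refine le_of_pow_le_pow_left₀ hq hM0 (hMS ▸ ?_)
    exact single_le_sum (f := fun J => splitProd a b J ^ (q + 1))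
      (fun J _ => h0 J) (by simpa using hJ.ne_empty)
  calc (∑ J : Finset ι with #J = 0 ∨ q + 1 ≤ #J, splitProd a b J) ^ (q + 1)
      ≤ splitProd a b ∅ ^ (q + 1) + vertexWeight ι (q + 1) * M ^ (q + 1) :=
        sum_splitProd_pow_succ_le ha hb hM0 hM q
    _ = splitProd a b ∅ ^ (q + 1)
          + ∑ J : Finset ι with J ≠ ∅, vertexWeight ι (q + 1) * splitProd a b J ^ (q + 1) := by
        rw [hMS, hS, mul_sum]
    _ ≤ splitProd a b ∅ ^ (q + 1) + ∑ J : Finset ι with J ≠ ∅,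
          vertexWeight ι (q + 1) ^ #J * splitProd a b J ^ (q + 1) := by
        gcongr with J hJ
        · exact h0 J
        · exact le_self_pow₀ (one_le_vertexWeight _) (by simpa using hJ)
    _ = ∏ j, (a j ^ (q + 1) + vertexWeight ι (q + 1) * b j ^ (q + 1)) := by
        rw [prod_pow_add_vertexWeight_mul_pow, ← add_sum_erase univ _ (mem_univ ∅)]
        simp [filter_ne']

/-- The number of members of the tuple `T` that contain `v`. -/
def vertexDegree (T : ι → Finset V) (v : V) : ℕ := #{j | v ∈ T j}

theorem card_filter_add_card_filter_compl_eq_vertexDegree (T : ι → Finset V) (S : Finset ι)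
    (v : V) :
    #{i ∈ S | v ∈ T i} + #{i ∈ Sᶜ | v ∈ T i} = vertexDegree T v := by
  rw [← card_union_of_disjoint (disjoint_filter_filter disjoint_compl_right), ← filter_union,
    union_compl, vertexDegree]

omit [DecidableEq ι] in
theorem sum_vertexDegree [Fintype V] (T : ι → Finset V) : ∑ v, vertexDegree T v = ∑ j, #(T j) := by
  simp only [vertexDegree, card_filter]
  rw [sum_comm]
  simp

omit [DecidableEq ι] in
theorem vertexDegree_sumElim {κ : Type*} [Fintype κ] (T : ι → Finset V) (T' : κ → Finset V)
    (v : V) :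
    vertexDegree (Sum.elim T T') v = vertexDegree T v + vertexDegree T' v := by
  simp only [vertexDegree, card_filter, Fintype.sum_sum_type, Sum.elim_inl, Sum.elim_inr]
  rfl

theorem sum_piFinset_powerset_insert {R : Type*} [AddCommMonoid R] {a : V} {s : Finset V}
    (ha : a ∉ s) (F : (ι → Finset V) → R) :
    ∑ T ∈ Fintype.piFinset fun _ : ι => (insert a s).powerset, F T
      = ∑ J : Finset ι, ∑ T ∈ Fintype.piFinset fun _ : ι => s.powerset,
          F fun j => if j ∈ J then insert a (T j) else T j := by
  rw [← sum_product']
  refine sum_nbij' (fun T => (univ.filter fun j => a ∈ T j, fun j => (T j).erase a))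
    (fun X j => if j ∈ X.1 then insert a (X.2 j) else X.2 j) ?_ ?_ ?_ ?_ ?_
  · intro T hT
    simp only [Fintype.mem_piFinset, mem_powerset, mem_product, mem_univ, true_and] at hT ⊢
    exact fun j => subset_insert_iff.1 (hT j)
  · rintro ⟨J, T⟩ hT
    simp only [Fintype.mem_piFinset, mem_powerset, mem_product, mem_univ, true_and] at hT ⊢
    intro j
    split_ifs
    · exact insert_subset_insert a (hT j)
    · exact (hT j).trans (subset_insert a s)
  · intro T _
    funext j
    by_cases h : a ∈ T j <;> simp [h]
  · rintro ⟨J, T⟩ hT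
    simp only [Fintype.mem_piFinset, mem_powerset, mem_product, mem_univ, true_and] at hT
    have haT (j : ι) : a ∉ T j := fun h => ha (hT j h)
    refine Prod.ext ?_ (funext fun j => ?_)
    · ext j
      by_cases h : j ∈ J <;> simp [h, haT]
    · by_cases h : j ∈ J <;> simp [h, haT]
  · intro T _
    congr 1
    funext j
    by_cases h : a ∈ T j <;> simp [h]

theorem forall_mem_insert_vertexDegree_iff (P : ℕ → Prop) {a : V} {s : Finset V} (ha : a ∉ s)
    (J : Finset ι) {T : ι → Finset V} (hT : ∀ j, T j ⊆ s) :
    (∀ v ∈ insert a s, P (vertexDegree (fun j => if j ∈ J then insert a (T j) else T j) v))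
      ↔ P #J ∧ ∀ v ∈ s, P (vertexDegree T v) := by
  have hdeg_a : vertexDegree (fun j => if j ∈ J then insert a (T j) else T j) a = #J := by
    unfold vertexDegree
    congr 1
    ext j
    have haT : a ∉ T j := fun h => ha (hT j h)
    by_cases h : j ∈ J <;> simp [h, haT]
  have hdeg (v : V) (hv : v ∈ s) :
      vertexDegree (fun j => if j ∈ J then insert a (T j) else T j) v = vertexDegree T v := by
    unfold vertexDegree
    congr 1
    ext j
    have hva : v ≠ a := ne_of_mem_of_not_mem hv ha
    by_cases h : j ∈ J <;> simp [h, hva]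
  rw [forall_mem_insert, hdeg_a]
  exact and_congr_right' (forall₂_congr fun v hv => by rw [hdeg v hv])

theorem sum_filter_piFinset_powerset_insert {R : Type*} [AddCommMonoid R] {P : ℕ → Prop}
    [DecidablePred P] {a : V} {s : Finset V} (ha : a ∉ s) (F : (ι → Finset V) → R) :
    ∑ T ∈ Fintype.piFinset fun _ : ι => (insert a s).powerset with
        ∀ v ∈ insert a s, P (vertexDegree T v), F T
      = ∑ J : Finset ι with P #J, ∑ T ∈ Fintype.piFinset fun _ : ι => s.powerset with
          ∀ v ∈ s, P (vertexDegree T v), F fun j => if j ∈ J then insert a (T j) else T j := by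
  have hdeg (J : Finset ι) {T : ι → Finset V} (hT : T ∈ Fintype.piFinset fun _ : ι => s.powerset) :=
    forall_mem_insert_vertexDegree_iff P ha J
      fun j => mem_powerset.1 (Fintype.mem_piFinset.1 hT j)
  rw [sum_filter, sum_piFinset_powerset_insert ha, sum_filter]
  refine sum_congr rfl fun J _ => ?_
  rw [sum_filter]
  split_ifs with hJ
  · exact sum_congr rfl fun T hT => by simp only [hdeg J hT, hJ, true_and]
  · exact sum_eq_zero fun T hT => by simp only [hdeg J hT, hJ, false_and, if_false]

/-- The `q`-th power of a weighted `ℓ^q` norm on the subsets of `s`, a set `t` carrying the weight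
`w ^ #t`. -/
def weightedPowSum (w : ℝ) (q : ℕ) (s : Finset V) (h : Finset V → ℝ) : ℝ :=
  ∑ t ∈ s.powerset, w ^ #t * h t ^ q

omit [DecidableEq V] in
theorem weightedPowSum_nonneg {w : ℝ} (hw : 0 ≤ w) (q : ℕ) (s : Finset V) {h : Finset V → ℝ}
    (hh : 0 ≤ h) : 0 ≤ weightedPowSum w q s h :=
  sum_nonneg fun t _ => mul_nonneg (pow_nonneg hw _) (pow_nonneg (hh t) _)

theorem weightedPowSum_insert (w : ℝ) (q : ℕ) {a : V} {s : Finset V} (ha : a ∉ s)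
    (h : Finset V → ℝ) :
    weightedPowSum w q (insert a s) h
      = weightedPowSum w q s h + w * weightedPowSum w q s (h ∘ insert a) := by
  rw [weightedPowSum, sum_powerset_insert ha, weightedPowSum, weightedPowSum, mul_sum]
  congr 1
  refine sum_congr rfl fun t ht => ?_
  rw [card_insert_of_notMem fun hat => ha (mem_powerset.1 ht hat), pow_succ', mul_assoc,
    Function.comp_apply]

theorem sum_prod_pow_insert_le {q : ℕ} (hq : q ≠ 0) {a : V} {s : Finset V} (ha : a ∉ s)
    {g : ι → Finset V → ℝ} (hg : ∀ j, 0 ≤ g j) {b b' : ι → ℝ} (hb : 0 ≤ b) (hb' : 0 ≤ b')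
    (hfix : ∀ J : Finset ι, ∑ T ∈ Fintype.piFinset fun _ : ι => s.powerset with
      ∀ v ∈ s, vertexDegree T v = 0 ∨ q ≤ vertexDegree T v,
        ∏ j, g j (if j ∈ J then insert a (T j) else T j) ≤ splitProd b b' J) :
    (∑ T ∈ Fintype.piFinset fun _ : ι => (insert a s).powerset with
        ∀ v ∈ insert a s, vertexDegree T v = 0 ∨ q ≤ vertexDegree T v, ∏ j, g j (T j)) ^ q
      ≤ ∏ j, (b j ^ q + vertexWeight ι q * b' j ^ q) := by
  have hterm (J : Finset ι) (T : ι → Finset V) :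
      0 ≤ ∏ j, g j (if j ∈ J then insert a (T j) else T j) :=
    prod_nonneg fun j _ => hg j (if j ∈ J then insert a (T j) else T j)
  rw [sum_filter_piFinset_powerset_insert (P := fun m => m = 0 ∨ q ≤ m) ha
    (fun T => ∏ j, g j (T j))]
  calc (∑ J : Finset ι with #J = 0 ∨ q ≤ #J, ∑ T ∈ Fintype.piFinset fun _ : ι => s.powerset with
        ∀ v ∈ s, vertexDegree T v = 0 ∨ q ≤ vertexDegree T v,
          ∏ j, g j (if j ∈ J then insert a (T j) else T j)) ^ q
      ≤ (∑ J : Finset ι with #J = 0 ∨ q ≤ #J, splitProd b b' J) ^ q :=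
        pow_le_pow_left₀ (sum_nonneg fun J _ => sum_nonneg fun T _ => hterm J T)
          (sum_le_sum fun J _ => hfix J) q
    _ ≤ ∏ j, (b j ^ q + vertexWeight ι q * b' j ^ q) := sum_splitProd_pow_le hb hb' hq

/-- **Tensorized Hölder inequality.** Since a vertex lying in some member of the tuple lies in at
least `q` of them, the `ℓ^q` norms suffice whatever the number of members. -/
theorem sum_prod_pow_le_prod_weightedPowSum {q : ℕ} (hq : q ≠ 0) (s : Finset V)
    {g : ι → Finset V → ℝ} (hg : ∀ j, 0 ≤ g j) :
    (∑ T ∈ Fintype.piFinset fun _ : ι => s.powerset with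
        ∀ v ∈ s, vertexDegree T v = 0 ∨ q ≤ vertexDegree T v, ∏ j, g j (T j)) ^ q
      ≤ ∏ j, weightedPowSum (vertexWeight ι q) q s (g j) := by
  induction s using Finset.induction_on generalizing g with
  | empty => simp [weightedPowSum, prod_pow]
  | insert a s ha ih =>
    have hw := vertexWeight_nonneg (ι := ι) q
    have hg_insert (j : ι) : 0 ≤ g j ∘ insert a := fun t => hg j (insert a t)
    obtain ⟨root, hroot, hroot_pow⟩ : ∃ root : (Finset V → ℝ) → ℝ, (∀ h, 0 ≤ h → 0 ≤ root h) ∧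
        ∀ h, 0 ≤ h → root h ^ q = weightedPowSum (vertexWeight ι q) q s h :=
      ⟨fun h => weightedPowSum (vertexWeight ι q) q s h ^ (q : ℝ)⁻¹,
        fun h hh => Real.rpow_nonneg (weightedPowSum_nonneg hw q s hh) _,
        fun h hh => Real.rpow_inv_natCast_pow (weightedPowSum_nonneg hw q s hh) hq⟩
    set b : ι → ℝ := fun j => root (g j)
    set b' : ι → ℝ := fun j => root (g j ∘ insert a)
    have hb : 0 ≤ b := fun j => hroot _ (hg j)
    have hb' : 0 ≤ b' := fun j => hroot _ (hg_insert j)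
    refine (sum_prod_pow_insert_le hq ha hg hb hb' fun J => ?_).trans_eq ?_
    · refine le_of_pow_le_pow_left₀ hq (splitProd_nonneg hb hb' J) ?_
      refine (ih (g := fun j t => g j (if j ∈ J then insert a t else t))
        fun j t => hg j (if j ∈ J then insert a t else t)).trans_eq ?_
      rw [splitProd_eq_prod_ite, ← prod_pow]
      refine prod_congr rfl fun j _ => ?_
      split_ifs
      exacts [(hroot_pow _ (hg_insert j)).symm, (hroot_pow _ (hg j)).symm]
    · refine prod_congr rfl fun j _ => ?_
      rw [weightedPowSum_insert _ _ ha, hroot_pow _ (hg j), hroot_pow _ (hg_insert j)]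

end TensorizedHolder

section AdmissibleTuples

open Finset

variable {κ V : Type*} [Fintype κ] [Fintype V] [DecidableEq V]

/-- A tuple of sets is admissible if no vertex lies in exactly one of them and each of them has a
vertex shared by at least four. Every tuple that survives in the second moment of `AError` is of
this form. -/
structure IsAdmissible (T : κ → Finset V) : Prop where
  vertexDegree_ne_one (v : V) : vertexDegree T v ≠ 1
  exists_four_le_vertexDegree (j : κ) : ∃ v ∈ T j, 4 ≤ vertexDegree T v

instance : DecidablePred (IsAdmissible (κ := κ) (V := V)) := fun T =>
  decidable_of_iff ((∀ v, vertexDegree T v ≠ 1) ∧ ∀ j, ∃ v ∈ T j, 4 ≤ vertexDegree T v)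
    ⟨fun h => ⟨h.1, h.2⟩, fun h => ⟨h.1, h.2⟩⟩

/-- The restriction of a tuple of sets to the vertices whose degree satisfies `P`. -/
def degreeFilter (P : ℕ → Prop) [DecidablePred P] (T : κ → Finset V) (j : κ) : Finset V :=
  {v ∈ T j | P (vertexDegree T v)}

omit [Fintype V] in
theorem mem_degreeFilter {P : ℕ → Prop} [DecidablePred P] {T : κ → Finset V} {j : κ} {v : V} :
    v ∈ degreeFilter P T j ↔ v ∈ T j ∧ P (vertexDegree T v) :=
  mem_filter

omit [Fintype V] in
theorem vertexDegree_degreeFilter (P : ℕ → Prop) [DecidablePred P] (T : κ → Finset V) (v : V) :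
    vertexDegree (degreeFilter P T) v = if P (vertexDegree T v) then vertexDegree T v else 0 := by
  have hmem (j : κ) : v ∈ degreeFilter P T j ↔ v ∈ T j ∧ P (vertexDegree T v) := mem_degreeFilter
  split_ifs with h
  · exact congrArg card (filter_congr fun j _ => (hmem j).trans (and_iff_left h))
  · exact card_eq_zero.2 (filter_eq_empty_iff.2 fun j _ hj => h ((hmem j).1 hj).2)

omit [Fintype V] in
theorem degreeFilter_union_degreeFilter_not (P : ℕ → Prop) [DecidablePred P] (T : κ → Finset V)
    (j : κ) : degreeFilter P T j ∪ degreeFilter (¬ P ·) T j = T j :=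
  filter_union_filter_not_eq _ _

omit [Fintype V] in
theorem IsAdmissible.nonempty_degreeFilter {T : κ → Finset V} (hT : IsAdmissible T) (j : κ) :
    (degreeFilter (4 ≤ ·) T j).Nonempty := by
  obtain ⟨v, hv, hv4⟩ := hT.exists_four_le_vertexDegree j
  exact ⟨v, mem_degreeFilter.2 ⟨hv, hv4⟩⟩

/-- The coefficient `c (b ∪ u)` of a set split into a nonempty part `b` and a remainder `u`;
zero when `b` and `u` do not form such a splitting. -/
def splitCoeff (c : Finset V → ℝ) (b u : Finset V) : ℝ :=
  if b.Nonempty ∧ Disjoint b u then c (b ∪ u) else 0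

omit [Fintype V] in
theorem splitCoeff_nonneg {c : Finset V → ℝ} (hc : 0 ≤ c) (b u : Finset V) :
    0 ≤ splitCoeff c b u := by
  unfold splitCoeff
  split_ifs
  exacts [hc _, le_rfl]

omit [Fintype V] in
theorem card_add_card_le_of_splitCoeff_ne_zero {c : Finset V → ℝ} {d : ℕ}
    (hcard : ∀ t, c t ≠ 0 → #t ≤ d) {b u : Finset V} (h : splitCoeff c b u ≠ 0) : #b + #u ≤ d := by
  obtain ⟨⟨-, hbu⟩, hc⟩ := ite_ne_right_iff.1 h
  exact card_union_of_disjoint hbu ▸ hcard _ hc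

theorem sum_splitCoeff_sq_of_nonempty (c : Finset V → ℝ) {b : Finset V} (hb : b.Nonempty) :
    ∑ u, splitCoeff c b u ^ 2 = ∑ t with b ⊆ t, c t ^ 2 := by
  simp only [splitCoeff, hb, true_and, ite_pow, ne_eq, two_ne_zero, not_false_eq_true, zero_pow]
  rw [← sum_filter]
  refine sum_nbij' (b ∪ ·) (· \ b) (by simp) (by simp [disjoint_sdiff]) ?_ ?_ (by simp)
  · intro u hu
    exact union_sdiff_cancel_left (mem_filter.1 hu).2
  · intro t ht
    exact union_sdiff_of_subset (mem_filter.1 ht).2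

theorem sum_splitCoeff_sq_le {c : Finset V → ℝ} {τ : ℝ} (hτ : 0 ≤ τ)
    (hinf : ∀ v, ∑ t with v ∈ t, c t ^ 2 ≤ τ) (b : Finset V) :
    ∑ u, splitCoeff c b u ^ 2 ≤ τ := by
  rcases b.eq_empty_or_nonempty with rfl | hb
  · simpa [splitCoeff] using hτ
  · obtain ⟨v, hv⟩ := hb
    rw [sum_splitCoeff_sq_of_nonempty c ⟨v, hv⟩]
    exact (sum_le_sum_of_subset_of_nonneg (monotone_filter_right _ fun t _ ht => ht hv)
      fun t _ _ => sq_nonneg _).trans (hinf v)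

theorem sum_sum_splitCoeff_sq_le {c : Finset V → ℝ} {d : ℕ} (hcard : ∀ t, c t ≠ 0 → #t ≤ d)
    (hsq : ∑ t, c t ^ 2 ≤ 1) : ∑ b, ∑ u, splitCoeff c b u ^ 2 ≤ 2 ^ d := by
  calc ∑ b, ∑ u, splitCoeff c b u ^ 2 ≤ ∑ b : Finset V, ∑ t with b ⊆ t, c t ^ 2 := by
        refine sum_le_sum fun b _ => ?_
        rcases b.eq_empty_or_nonempty with rfl | hb
        · simpa [splitCoeff] using sum_nonneg fun t _ => sq_nonneg (c t)
        · exact (sum_splitCoeff_sq_of_nonempty c hb).le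
    _ = ∑ t : Finset V, ∑ _b ∈ t.powerset, c t ^ 2 :=
        sum_comm' fun b t => by simp
    _ = ∑ t : Finset V, 2 ^ #t * c t ^ 2 := by simp [card_powerset]
    _ ≤ ∑ t : Finset V, 2 ^ d * c t ^ 2 := by
        refine sum_le_sum fun t _ => ?_
        rcases eq_or_ne (c t) 0 with h | h
        · simp [h]
        · gcongr
          exacts [one_le_two, hcard t h]
    _ ≤ 2 ^ d := by
        rw [← mul_sum]
        exact mul_le_of_le_one_right (by positivity) hsq

omit [Fintype V] in
theorem IsAdmissible.splitCoeff_degreeFilter {T : κ → Finset V} (hT : IsAdmissible T)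
    (c : Finset V → ℝ) (j : κ) :
    splitCoeff c (degreeFilter (4 ≤ ·) T j) (degreeFilter (¬ 4 ≤ ·) T j) = c (T j) := by
  rw [splitCoeff, if_pos ⟨hT.nonempty_degreeFilter j, disjoint_filter_filter_not _ _ _⟩]
  exact congrArg c (degreeFilter_union_degreeFilter_not _ T j)

variable [DecidableEq κ]

/-- Splitting each set into its vertices of degree at least four and the remaining ones, whose
degree is at least two. -/
theorem sum_isAdmissible_prod_le_sum_splitCoeff {c : κ → Finset V → ℝ} (hc : ∀ j, 0 ≤ c j) :
    ∑ T : κ → Finset V with IsAdmissible T, ∏ j, c j (T j)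
      ≤ ∑ H : κ → Finset V with ∀ v, vertexDegree H v = 0 ∨ 4 ≤ vertexDegree H v,
          ∑ L : κ → Finset V with ∀ v, vertexDegree L v = 0 ∨ 2 ≤ vertexDegree L v,
            ∏ j, splitCoeff (c j) (H j) (L j) := by
  set H : Finset (κ → Finset V) := {H | ∀ v, vertexDegree H v = 0 ∨ 4 ≤ vertexDegree H v} with hH
  set L : Finset (κ → Finset V) := {L | ∀ v, vertexDegree L v = 0 ∨ 2 ≤ vertexDegree L v} with hL
  let split (T : κ → Finset V) : (κ → Finset V) × (κ → Finset V) :=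
    (degreeFilter (4 ≤ ·) T, degreeFilter (¬ 4 ≤ ·) T)
  have hsplit_inj : Function.Injective split := fun T T' h => funext fun j => by
    have hheavy : degreeFilter (4 ≤ ·) T = degreeFilter (4 ≤ ·) T' := congrArg Prod.fst h
    have hlight : degreeFilter (¬ 4 ≤ ·) T = degreeFilter (¬ 4 ≤ ·) T' := congrArg Prod.snd h
    rw [← degreeFilter_union_degreeFilter_not (4 ≤ ·) T, hheavy, hlight,
      degreeFilter_union_degreeFilter_not]
  have hsplit_mem : image split {T | IsAdmissible T} ⊆ H ×ˢ L := by
    refine image_subset_iff.2 fun T hT => ?_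
    have hne := (mem_filter.1 hT).2.vertexDegree_ne_one
    simp only [split, mem_product, hH, hL, mem_filter_univ, vertexDegree_degreeFilter]
    exact ⟨fun v => by split_ifs <;> lia, fun v => by specialize hne v; split_ifs <;> lia⟩
  let F (X : (κ → Finset V) × (κ → Finset V)) : ℝ := ∏ j, splitCoeff (c j) (X.1 j) (X.2 j)
  have hF (X) : 0 ≤ F X := prod_nonneg fun j _ => splitCoeff_nonneg (hc j) (X.1 j) (X.2 j)
  calc ∑ T : κ → Finset V with IsAdmissible T, ∏ j, c j (T j)
      = ∑ T : κ → Finset V with IsAdmissible T, F (split T) :=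
        sum_congr rfl fun T hT => prod_congr rfl fun j _ =>
          ((mem_filter.1 hT).2.splitCoeff_degreeFilter (c j) j).symm
    _ = ∑ X ∈ image split {T | IsAdmissible T}, F X := (sum_image hsplit_inj.injOn).symm
    _ ≤ ∑ X ∈ H ×ˢ L, F X :=
        sum_le_sum_of_subset_of_nonneg hsplit_mem fun X _ _ => hF X
    _ = ∑ X ∈ H, ∑ Y ∈ L, F (X, Y) := sum_product _ _ _

theorem sum_prod_pow_le_prod_sum_pow {q : ℕ} (hq : q ≠ 0) {g : κ → Finset V → ℝ}
    (hg : ∀ j, 0 ≤ g j) :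
    (∑ T : κ → Finset V with ∀ v, vertexDegree T v = 0 ∨ q ≤ vertexDegree T v,
        ∏ j, g j (T j)) ^ q
      ≤ ∏ j, ∑ t, vertexWeight κ q ^ #t * g j t ^ q := by
  simpa [weightedPowSum] using sum_prod_pow_le_prod_weightedPowSum hq univ hg

omit [DecidableEq κ] in
theorem sum_vertexWeight_mul_splitCoeff_sq_le {c : Finset V → ℝ} {d : ℕ}
    (hcard : ∀ t, c t ≠ 0 → #t ≤ d) (b : Finset V) :
    ∑ u, vertexWeight κ 2 ^ #u * splitCoeff c b u ^ 2
      ≤ vertexWeight κ 2 ^ d * ∑ u, splitCoeff c b u ^ 2 := by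
  rw [mul_sum]
  refine sum_le_sum fun u _ => ?_
  rcases eq_or_ne (splitCoeff c b u) 0 with h | h
  · simp [h]
  · have := card_add_card_le_of_splitCoeff_ne_zero hcard h
    gcongr
    exacts [one_le_vertexWeight 2, by lia]

omit [DecidableEq κ] in
theorem sum_vertexWeight_mul_sum_splitCoeff_sq_sq_le {c : Finset V → ℝ} {d : ℕ} {τ : ℝ}
    (hcard : ∀ t, c t ≠ 0 → #t ≤ d) (hsq : ∑ t, c t ^ 2 ≤ 1) (hτ : 0 ≤ τ)
    (hinf : ∀ v, ∑ t with v ∈ t, c t ^ 2 ≤ τ) :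
    ∑ b, vertexWeight κ 4 ^ #b * (∑ u, vertexWeight κ 2 ^ #u * splitCoeff c b u ^ 2) ^ 2
      ≤ vertexWeight κ 4 ^ d * (vertexWeight κ 2 ^ d) ^ 2 * 2 ^ d * τ := by
  have hw2 := vertexWeight_nonneg (ι := κ) 2
  have hw4 := vertexWeight_nonneg (ι := κ) 4
  have hterm (b : Finset V) :
      vertexWeight κ 4 ^ #b * (∑ u, vertexWeight κ 2 ^ #u * splitCoeff c b u ^ 2) ^ 2
        ≤ vertexWeight κ 4 ^ d * (vertexWeight κ 2 ^ d) ^ 2 * τ * ∑ u, splitCoeff c b u ^ 2 := by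
    by_cases hb : ∃ u, splitCoeff c b u ≠ 0
    · obtain ⟨u, hu⟩ := hb
      have hbd : #b ≤ d := le_of_add_le_left (card_add_card_le_of_splitCoeff_ne_zero hcard hu)
      calc _ ≤ vertexWeight κ 4 ^ d * (vertexWeight κ 2 ^ d * ∑ u, splitCoeff c b u ^ 2) ^ 2 := by
            gcongr
            exacts [one_le_vertexWeight 4, sum_vertexWeight_mul_splitCoeff_sq_le hcard b]
        _ = vertexWeight κ 4 ^ d * (vertexWeight κ 2 ^ d) ^ 2
              * ((∑ u, splitCoeff c b u ^ 2) * ∑ u, splitCoeff c b u ^ 2) := by ring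
        _ ≤ vertexWeight κ 4 ^ d * (vertexWeight κ 2 ^ d) ^ 2
              * (τ * ∑ u, splitCoeff c b u ^ 2) := by
            gcongr
            exact sum_splitCoeff_sq_le hτ hinf b
        _ = _ := by ring
    · push Not at hb
      simp [hb]
  calc _ ≤ ∑ b, vertexWeight κ 4 ^ d * (vertexWeight κ 2 ^ d) ^ 2 * τ
            * ∑ u, splitCoeff c b u ^ 2 := sum_le_sum fun b _ => hterm b
    _ ≤ vertexWeight κ 4 ^ d * (vertexWeight κ 2 ^ d) ^ 2 * τ * 2 ^ d := by
        rw [← mul_sum]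
        gcongr
        exact sum_sum_splitCoeff_sq_le hcard hsq
    _ = _ := by ring

theorem sum_isAdmissible_prod_pow_four_le {c : κ → Finset V → ℝ} {d : ℕ} {τ : ℝ}
    (hc : ∀ j, 0 ≤ c j) (hcard : ∀ j t, c j t ≠ 0 → #t ≤ d) (hsq : ∀ j, ∑ t, c j t ^ 2 ≤ 1)
    (hτ : 0 ≤ τ) (hinf : ∀ j v, ∑ t with v ∈ t, c j t ^ 2 ≤ τ) :
    (∑ T : κ → Finset V with IsAdmissible T, ∏ j, c j (T j)) ^ 4
      ≤ (vertexWeight κ 4 ^ d * (vertexWeight κ 2 ^ d) ^ 2 * 2 ^ d * τ) ^ Fintype.card κ := by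
  let mass (j : κ) (b : Finset V) : ℝ := ∑ u, vertexWeight κ 2 ^ #u * splitCoeff (c j) b u ^ 2
  have hmass (j : κ) (b : Finset V) : 0 ≤ mass j b := sum_nonneg fun u _ =>
    mul_nonneg (pow_nonneg (vertexWeight_nonneg 2) _) (sq_nonneg _)
  have hinner (H : κ → Finset V) :
      ∑ L : κ → Finset V with ∀ v, vertexDegree L v = 0 ∨ 2 ≤ vertexDegree L v,
        ∏ j, splitCoeff (c j) (H j) (L j) ≤ ∏ j, √(mass j (H j)) := by
    rw [← Real.sqrt_prod univ fun j _ => hmass j (H j)]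
    exact Real.le_sqrt_of_sq_le
      (sum_prod_pow_le_prod_sum_pow two_ne_zero fun j => splitCoeff_nonneg (hc j) (H j))
  have hfour (j : κ) (b : Finset V) : √(mass j b) ^ 4 = mass j b ^ 2 := by
    rw [show 4 = 2 * 2 from rfl, pow_mul, Real.sq_sqrt (hmass j b)]
  have hprod (T : κ → Finset V) : 0 ≤ ∏ j, c j (T j) := prod_nonneg fun j _ => hc j (T j)
  calc (∑ T : κ → Finset V with IsAdmissible T, ∏ j, c j (T j)) ^ 4
      ≤ (∑ H : κ → Finset V with ∀ v, vertexDegree H v = 0 ∨ 4 ≤ vertexDegree H v,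
          ∏ j, √(mass j (H j))) ^ 4 := by
        refine pow_le_pow_left₀ (sum_nonneg fun T _ => hprod T) ?_ 4
        exact (sum_isAdmissible_prod_le_sum_splitCoeff hc).trans (sum_le_sum fun H _ => hinner H)
    _ ≤ ∏ j, ∑ b, vertexWeight κ 4 ^ #b * √(mass j b) ^ 4 :=
        sum_prod_pow_le_prod_sum_pow four_ne_zero fun j b => Real.sqrt_nonneg _
    _ ≤ ∏ _j : κ, vertexWeight κ 4 ^ d * (vertexWeight κ 2 ^ d) ^ 2 * 2 ^ d * τ := by
        simp only [hfour]
        refine prod_le_prod (fun j _ => sum_nonneg fun b _ =>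
          mul_nonneg (pow_nonneg (vertexWeight_nonneg 4) _) (sq_nonneg _)) fun j _ => ?_
        exact sum_vertexWeight_mul_sum_splitCoeff_sq_sq_le (hcard j) (hsq j) hτ (hinf j)
    _ = _ := by rw [prod_const, card_univ]

end AdmissibleTuples

section GaussianExpectation

open Finset MvPolynomial

/-- The moment `E[Z ^ r]` of a standard Gaussian variable `Z`. -/
noncomputable def gaussianMoment (r : ℕ) : ℝ := ∫ x, x ^ r ∂(gaussianReal 0 1)

theorem integrable_pow_gaussianReal (r : ℕ) :
    Integrable (fun x : ℝ => x ^ r) (gaussianReal 0 1) := by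
  simpa using integrable_pow_of_mem_interior_integrableExpSet (X := id) (μ := gaussianReal 0 1)
    (by simp) r

theorem gaussianMoment_zero : gaussianMoment 0 = 1 := by simp [gaussianMoment]

theorem gaussianMoment_of_odd {r : ℕ} (hr : Odd r) : gaussianMoment r = 0 := by
  have hneg : gaussianMoment r = -gaussianMoment r := by
    calc gaussianMoment r = ∫ x, x ^ r ∂((gaussianReal 0 1).map fun x => -x) := by
          rw [gaussianReal_map_neg, neg_zero, gaussianMoment]
      _ = ∫ x, -x ^ r ∂(gaussianReal 0 1) := by
          rw [integral_map (by fun_prop) (by fun_prop)]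
          simp only [hr.neg_pow]
      _ = -gaussianMoment r := integral_neg _
  linarith

theorem gaussianMoment_two : gaussianMoment 2 = 1 := by
  have h := variance_id_gaussianReal (μ := 0) (v := 1)
  rw [variance_eq_integral (by fun_prop)] at h
  simpa [gaussianMoment] using h

theorem gaussianMoment_of_even_of_le_two {r : ℕ} (hr : Even r) (hr2 : r ≤ 2) :
    gaussianMoment r = 1 := by
  interval_cases r
  · exact gaussianMoment_zero
  · exact absurd hr (by decide)
  · exact gaussianMoment_two

theorem gaussianMoment_congr_of_le_two {r s : ℕ} (hr : r ≤ 2) (hs : s ≤ 2)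
    (h : Even r ↔ Even s) : gaussianMoment r = gaussianMoment s := by
  rcases r.even_or_odd with hre | hro
  · rw [gaussianMoment_of_even_of_le_two hre hr, gaussianMoment_of_even_of_le_two (h.1 hre) hs]
  · have hso : Odd s := Nat.not_even_iff_odd.1 fun hse => Nat.not_even_iff_odd.2 hro (h.2 hse)
    rw [gaussianMoment_of_odd hro, gaussianMoment_of_odd hso]

theorem exists_abs_gaussianMoment_le_pow (m : ℕ) :
    ∃ R : ℝ, 1 ≤ R ∧ ∀ r ≤ m, |gaussianMoment r| ≤ R ^ r := by
  have hsum : 0 ≤ ∑ r ∈ range (m + 1), |gaussianMoment r| := sum_nonneg fun r _ => abs_nonneg _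
  refine ⟨1 + ∑ r ∈ range (m + 1), |gaussianMoment r|, by linarith, fun r hr => ?_⟩
  rcases eq_or_ne r 0 with rfl | hr0
  · simp [gaussianMoment_zero]
  · calc |gaussianMoment r| ≤ ∑ r ∈ range (m + 1), |gaussianMoment r| :=
          single_le_sum (f := fun r => |gaussianMoment r|) (fun r _ => abs_nonneg _)
            (mem_range_succ_iff.2 hr)
      _ ≤ 1 + ∑ r ∈ range (m + 1), |gaussianMoment r| := by linarith
      _ ≤ _ := le_self_pow₀ (by linarith) hr0

theorem abs_prod_gaussianMoment_le_pow_sum {V : Type*} [Fintype V] {m : ℕ} {R : ℝ}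
    (hR : ∀ r ≤ m, |gaussianMoment r| ≤ R ^ r) {e : V → ℕ} (he : ∀ v, e v ≤ m) :
    |∏ v, gaussianMoment (e v)| ≤ R ^ ∑ v, e v := by
  rw [abs_prod, ← prod_pow_eq_pow_sum]
  exact prod_le_prod (fun v _ => abs_nonneg _) fun v _ => hR _ (he v)

variable {n : ℕ}

theorem integrable_eval_stdGaussian (p : MvPolynomial (Fin n) ℝ) :
    Integrable (fun x => eval x p) (stdGaussian n) := by
  simp only [eval_eq']
  refine integrable_finsetSum _ fun m _ => Integrable.const_mul ?_ _
  exact Integrable.fintype_prod (f := fun v (y : ℝ) => y ^ m v)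
    fun v => integrable_pow_gaussianReal (m v)

/-- The expectation `E[p(X)]` at a standard Gaussian vector `X`, as a linear functional of the
polynomial `p`. -/
noncomputable def gaussianExpectation (n : ℕ) : MvPolynomial (Fin n) ℝ →ₗ[ℝ] ℝ where
  toFun p := ∫ x, eval x p ∂(stdGaussian n)
  map_add' p q := by
    simp only [map_add]
    exact integral_add (integrable_eval_stdGaussian p) (integrable_eval_stdGaussian q)
  map_smul' a p := by
    simp only [smul_eval, integral_const_mul, RingHom.id_apply, smul_eq_mul]

theorem gaussianExpectation_monomial (m : Fin n →₀ ℕ) (a : ℝ) :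
    gaussianExpectation n (monomial m a) = a * ∏ v, gaussianMoment (m v) := by
  calc gaussianExpectation n (monomial m a) = ∫ x, a * ∏ v, x v ^ m v ∂(stdGaussian n) := by
        simp only [gaussianExpectation, LinearMap.coe_mk, AddHom.coe_mk, eval_monomial,
          Finsupp.prod_pow]
    _ = a * ∏ v, gaussianMoment (m v) := by
        rw [integral_const_mul]
        exact congrArg (a * ·) (integral_fintype_prod_eq_prod fun v (y : ℝ) => y ^ m v)

theorem gaussL2_sq (p : MvPolynomial (Fin n) ℝ) :
    gaussL2 p ^ 2 = gaussianExpectation n (p ^ 2) := by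
  rw [gaussL2, Real.sq_sqrt (integral_nonneg fun x => sq_nonneg _)]
  simp [gaussianExpectation]

theorem influence_eq_gaussianExpectation (i : Fin n) (p : MvPolynomial (Fin n) ℝ) :
    influence i p = gaussianExpectation n (pderiv i p ^ 2) := by
  simp [influence, gaussianExpectation]

end GaussianExpectation

section MultilinearPolynomials

open Finset MvPolynomial

variable {n : ℕ} {p : MvPolynomial (Fin n) ℝ}

/-- The exponent vector of the squarefree monomial `∏ v ∈ s, X v`. -/
noncomputable def setExponent (s : Finset (Fin n)) : Fin n →₀ ℕ := Finsupp.indicator s fun _ _ => 1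

theorem setExponent_apply (s : Finset (Fin n)) (v : Fin n) :
    setExponent s v = if v ∈ s then 1 else 0 := by
  simp [setExponent]

theorem setExponent_injective : Function.Injective (setExponent (n := n)) :=
  Function.LeftInverse.injective (g := Finsupp.support) fun s => by
    ext v; simp [setExponent_apply]

theorem setExponent_support {m : Fin n →₀ ℕ} (hm : ∀ v, m v ≤ 1) : setExponent m.support = m := by
  ext v
  have := hm v
  rw [setExponent_apply]
  split_ifs with hv <;> simp only [Finsupp.mem_support_iff] at hv <;> lia

theorem IsMultilinear.eq_sum (hp : IsMultilinear p) :
    p = ∑ s, p.coeff (setExponent s) • monomial (setExponent s) 1 := by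
  have hsupp : p.support ⊆ univ.image setExponent := fun m hm =>
    mem_image.2 ⟨m.support, mem_univ _, setExponent_support fun v => degreeOf_le_iff.1 (hp v) m hm⟩
  calc p = ∑ m ∈ p.support, monomial m (p.coeff m) := p.as_sum
    _ = ∑ m ∈ univ.image setExponent, monomial m (p.coeff m) :=
        sum_subset hsupp fun m _ hm => by rw [notMem_support_iff.1 hm, monomial_zero]
    _ = _ := by
        rw [sum_image setExponent_injective.injOn]
        simp only [smul_monomial, smul_eq_mul, mul_one]

theorem card_le_totalDegree_of_coeff_setExponent_ne_zero {s : Finset (Fin n)}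
    (hs : p.coeff (setExponent s) ≠ 0) : #s ≤ p.totalDegree := by
  refine le_trans (le_of_eq ?_) (le_totalDegree (mem_support_iff.2 hs))
  simp [Finsupp.sum_fintype, setExponent_apply]

theorem gaussianExpectation_monomial_setExponent_mul (s t : Finset (Fin n)) :
    gaussianExpectation n (monomial (setExponent s) 1 * monomial (setExponent t) 1)
      = if s = t then 1 else 0 := by
  rw [monomial_mul, gaussianExpectation_monomial, one_mul, one_mul]
  simp only [Finsupp.add_apply, setExponent_apply]
  split_ifs with hst
  · refine prod_eq_one fun v _ => gaussianMoment_of_even_of_le_two ?_ ?_ <;>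
      by_cases hv : v ∈ t <;> simp [hst, hv]
  · obtain ⟨v, hv⟩ : ∃ v, ¬ (v ∈ s ↔ v ∈ t) := by simpa [Finset.ext_iff] using hst
    refine prod_eq_zero (mem_univ v) (gaussianMoment_of_odd ?_)
    by_cases hvs : v ∈ s <;> by_cases hvt : v ∈ t <;> simp_all

theorem IsMultilinear.gaussianExpectation_sq (hp : IsMultilinear p) :
    gaussianExpectation n (p ^ 2) = ∑ s, p.coeff (setExponent s) ^ 2 := by
  conv_lhs => rw [hp.eq_sum, sq, sum_mul_sum]
  simp only [map_sum, smul_mul_smul_comm, map_smul, gaussianExpectation_monomial_setExponent_mul,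
    smul_eq_mul, mul_ite, mul_one, mul_zero, sum_ite_eq, mem_univ, if_true, ← sq]

theorem IsMultilinear.pderiv (hp : IsMultilinear p) (i : Fin n) :
    IsMultilinear (MvPolynomial.pderiv i p) := fun j => by
  refine degreeOf_le_iff.2 fun m hm => ?_
  have hcoeff : p.coeff (m + Finsupp.single i 1) ≠ 0 := by
    rw [mem_support_iff, coeff_pderiv] at hm
    exact left_ne_zero_of_mul hm
  have := degreeOf_le_iff.1 (hp j) _ (mem_support_iff.2 hcoeff)
  rw [Finsupp.add_apply] at this
  lia

theorem IsMultilinear.coeff_pderiv_setExponent (hp : IsMultilinear p) (i : Fin n)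
    (s : Finset (Fin n)) :
    (MvPolynomial.pderiv i p).coeff (setExponent s)
      = if i ∈ s then 0 else p.coeff (setExponent (insert i s)) := by
  rw [coeff_pderiv, setExponent_apply]
  split_ifs with hi
  · refine mul_eq_zero_of_left (notMem_support_iff.1 fun hmem => ?_) _
    have := degreeOf_le_iff.1 (hp i) _ hmem
    simp [setExponent_apply, hi] at this
  · have : setExponent s + Finsupp.single i 1 = setExponent (insert i s) := by
      ext v
      rcases eq_or_ne v i with rfl | hv <;> simp [setExponent_apply, *]
    simp [this]

theorem IsMultilinear.influence_eq_sum (hp : IsMultilinear p) (i : Fin n) :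
    influence i p = ∑ s with i ∈ s, p.coeff (setExponent s) ^ 2 := by
  rw [influence_eq_gaussianExpectation, (hp.pderiv i).gaussianExpectation_sq]
  simp only [hp.coeff_pderiv_setExponent, ite_pow, ne_eq, two_ne_zero, not_false_eq_true, zero_pow]
  rw [sum_ite, sum_const_zero, zero_add]
  refine sum_nbij' (insert i) (erase · i) (by simp) (by simp) ?_ ?_ (by simp)
  · exact fun s hs => erase_insert (mem_filter.1 hs).2
  · exact fun s hs => insert_erase (mem_filter.1 hs).2

end MultilinearPolynomials

section AErrorExpansion

open Finset MvPolynomial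

variable {n k : ℕ}

theorem multilinearize_eq_sum (q : MvPolynomial (Fin n) ℝ) {s : Finset (Fin n →₀ ℕ)}
    (hs : q.support ⊆ s) :
    multilinearize q
      = ∑ a ∈ s, monomial (Finsupp.mapRange (· % 2) (Nat.zero_mod 2) a) (q.coeff a) :=
  sum_subset hs fun a _ ha => by rw [notMem_support_iff.1 ha, monomial_zero]

theorem multilinearize_add (q r : MvPolynomial (Fin n) ℝ) :
    multilinearize (q + r) = multilinearize q + multilinearize r := by
  rw [multilinearize_eq_sum (q + r) support_add, multilinearize_eq_sum q subset_union_left,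
    multilinearize_eq_sum r subset_union_right, ← sum_add_distrib]
  simp only [coeff_add, map_add]

theorem multilinearize_smul (a : ℝ) (q : MvPolynomial (Fin n) ℝ) :
    multilinearize (a • q) = a • multilinearize q := by
  rw [multilinearize_eq_sum (a • q) support_smul, multilinearize, smul_sum]
  simp only [coeff_smul, smul_monomial]

theorem multilinearize_monomial (m : Fin n →₀ ℕ) (a : ℝ) :
    multilinearize (monomial m a)
      = monomial (Finsupp.mapRange (· % 2) (Nat.zero_mod 2) m) a := by
  rw [multilinearize_eq_sum _ support_monomial_subset, sum_singleton, coeff_monomial, if_pos rfl]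

theorem AError_update_add (p : Fin k → MvPolynomial (Fin n) ℝ) (i : Fin k)
    (q r : MvPolynomial (Fin n) ℝ) :
    AError (Function.update p i (q + r))
      = AError (Function.update p i q) + AError (Function.update p i r) := by
  simp only [AError, ← sum_add_distrib]
  refine sum_congr rfl fun S _ => ?_
  by_cases hi : i ∈ S
  · simp only [prod_update_of_mem hi, prod_update_of_notMem (notMem_compl.2 hi)]
    ring
  · simp only [prod_update_of_notMem hi, prod_update_of_mem (mem_compl.2 hi), add_mul,
      multilinearize_add]
    ring

theorem AError_update_smul (p : Fin k → MvPolynomial (Fin n) ℝ) (i : Fin k) (a : ℝ)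
    (q : MvPolynomial (Fin n) ℝ) :
    AError (Function.update p i (a • q)) = a • AError (Function.update p i q) := by
  simp only [AError, smul_sum]
  refine sum_congr rfl fun S _ => ?_
  by_cases hi : i ∈ S
  · simp only [prod_update_of_mem hi, prod_update_of_notMem (notMem_compl.2 hi), smul_mul_assoc,
      mul_smul_comm]
  · simp only [prod_update_of_notMem hi, prod_update_of_mem (mem_compl.2 hi), smul_mul_assoc,
      multilinearize_smul, mul_smul_comm]

/-- `AError` as a multilinear map of its `k` arguments. -/
noncomputable def AErrorMultilinear (n k : ℕ) :
    MultilinearMap ℝ (fun _ : Fin k => MvPolynomial (Fin n) ℝ) (MvPolynomial (Fin n) ℝ) :=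
  MultilinearMap.mk' AError AError_update_add AError_update_smul

/-- The error term of the squarefree monomials with vertex sets `T 0, …, T (k - 1)`. -/
noncomputable def monomialAError (T : Fin k → Finset (Fin n)) : MvPolynomial (Fin n) ℝ :=
  AError fun j => monomial (setExponent (T j)) 1

theorem AError_eq_sum_smul_monomialAError {p : Fin k → MvPolynomial (Fin n) ℝ}
    (hp : ∀ j, IsMultilinear (p j)) :
    AError p = ∑ T : Fin k → Finset (Fin n),
      (∏ j, (p j).coeff (setExponent (T j))) • monomialAError T := by
  calc AError p = AErrorMultilinear n k p := rfl
    _ = AErrorMultilinear n k fun j =>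
          ∑ s, (p j).coeff (setExponent s) • monomial (setExponent s) 1 :=
        congrArg _ (funext fun j => (hp j).eq_sum)
    _ = _ := by
        rw [MultilinearMap.map_sum]
        exact sum_congr rfl fun T _ => MultilinearMap.map_smul_univ _ _ _

/-- The exponent vector of the monomial contributed by `S` to `monomialAError T`. -/
noncomputable def errorExponent (T : Fin k → Finset (Fin n)) (S : Finset (Fin k)) : Fin n →₀ ℕ :=
  ∑ i ∈ S, setExponent (T i)
    + Finsupp.mapRange (· % 2) (Nat.zero_mod 2) (∑ i ∈ Sᶜ, setExponent (T i))

theorem errorExponent_apply (T : Fin k → Finset (Fin n)) (S : Finset (Fin k)) (v : Fin n) :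
    errorExponent T S v = #{i ∈ S | v ∈ T i} + #{i ∈ Sᶜ | v ∈ T i} % 2 := by
  simp [errorExponent, setExponent_apply]

theorem monomialAError_eq_sum (T : Fin k → Finset (Fin n)) :
    monomialAError T = ∑ S, monomial (errorExponent T S) ((-1) ^ #S) := by
  rw [monomialAError, AError]
  refine sum_congr rfl fun S _ => ?_
  rw [← monomial_sum_one, ← monomial_sum_one, multilinearize_monomial, mul_assoc, monomial_mul,
    mul_one, ← errorExponent, show (-1 : MvPolynomial (Fin n) ℝ) ^ #S = C ((-1) ^ #S) by simp,
    C_mul_monomial, mul_one]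

theorem errorExponent_le_vertexDegree (T : Fin k → Finset (Fin n)) (S : Finset (Fin k))
    (v : Fin n) : errorExponent T S v ≤ vertexDegree T v := by
  rw [errorExponent_apply, ← card_filter_add_card_filter_compl_eq_vertexDegree T S]
  gcongr
  exact Nat.mod_le _ _

theorem even_errorExponent_iff (T : Fin k → Finset (Fin n)) (S : Finset (Fin k)) (v : Fin n) :
    Even (errorExponent T S v) ↔ Even (vertexDegree T v) := by
  rw [errorExponent_apply, ← card_filter_add_card_filter_compl_eq_vertexDegree T S,
    Nat.even_iff, Nat.even_iff]
  lia

theorem errorExponent_insert_of_notMem {T : Fin k → Finset (Fin n)} {i : Fin k} {v : Fin n}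
    (hv : v ∉ T i) (S : Finset (Fin k)) : errorExponent T (insert i S) v = errorExponent T S v := by
  have hcompl : ({j ∈ (insert i S)ᶜ | v ∈ T j} : Finset (Fin k)) = {j ∈ Sᶜ | v ∈ T j} := by
    ext j
    rcases eq_or_ne j i with rfl | hj <;> simp [*]
  rw [errorExponent_apply, errorExponent_apply, hcompl, filter_insert, if_neg hv]

end AErrorExpansion

section ErrorCovariance

open Finset MvPolynomial

variable {n k : ℕ}

theorem gaussianExpectation_monomialAError_mul_monomial (T : Fin k → Finset (Fin n))
    (m : Fin n →₀ ℕ) (a : ℝ) :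
    gaussianExpectation n (monomialAError T * monomial m a)
      = a * ∑ S, (-1) ^ #S * ∏ v, gaussianMoment (errorExponent T S v + m v) := by
  simp only [monomialAError_eq_sum, sum_mul, map_sum, monomial_mul, gaussianExpectation_monomial,
    Finsupp.add_apply, mul_sum]
  exact sum_congr rfl fun S _ => by ring

theorem gaussianExpectation_monomialAError_mul_monomial_of_odd {T : Fin k → Finset (Fin n)}
    {m : Fin n →₀ ℕ} {v : Fin n} (hv : Odd (vertexDegree T v + m v)) (a : ℝ) :
    gaussianExpectation n (monomialAError T * monomial m a) = 0 := by
  rw [gaussianExpectation_monomialAError_mul_monomial, sum_eq_zero fun S _ => ?_, mul_zero]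
  have hodd : Odd (errorExponent T S v + m v) := by
    simpa only [← Nat.not_even_iff_odd, Nat.even_add, even_errorExponent_iff] using hv
  rw [prod_eq_zero (mem_univ v) (gaussianMoment_of_odd hodd), mul_zero]

/-- The terms of `S` and `insert i S` cancel: off `T i` their exponents agree, and on `T i` only
the parity of the exponent matters. -/
theorem gaussianExpectation_monomialAError_mul_monomial_of_le_two {T : Fin k → Finset (Fin n)}
    {m : Fin n →₀ ℕ} {i : Fin k} (hi : ∀ v ∈ T i, vertexDegree T v + m v ≤ 2) (a : ℝ) :
    gaussianExpectation n (monomialAError T * monomial m a) = 0 := by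
  have hmoment (S : Finset (Fin k)) (v : Fin n) :
      gaussianMoment (errorExponent T (insert i S) v + m v)
        = gaussianMoment (errorExponent T S v + m v) := by
    by_cases hv : v ∈ T i
    · have hle (S' : Finset (Fin k)) : errorExponent T S' v + m v ≤ 2 :=
        (Nat.add_le_add_right (errorExponent_le_vertexDegree T S' v) _).trans (hi v hv)
      refine gaussianMoment_congr_of_le_two (hle _) (hle _) ?_
      simp only [Nat.even_add, even_errorExponent_iff]
    · rw [errorExponent_insert_of_notMem hv]
  rw [gaussianExpectation_monomialAError_mul_monomial, ← powerset_univ,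
    ← insert_erase (mem_univ i), sum_powerset_insert (notMem_erase i univ), ← sum_add_distrib,
    sum_eq_zero fun S hS => ?_, mul_zero]
  have hiS : i ∉ S := fun h => notMem_erase i univ (mem_powerset.1 hS h)
  rw [card_insert_of_notMem hiS, prod_congr rfl fun v _ => hmoment S v]
  ring

theorem gaussianExpectation_monomialAError_mul_eq_sum (T T' : Fin k → Finset (Fin n)) :
    gaussianExpectation n (monomialAError T * monomialAError T')
      = ∑ S, gaussianExpectation n
          (monomialAError T * monomial (errorExponent T' S) ((-1) ^ #S)) := by
  rw [monomialAError_eq_sum T', mul_sum, map_sum]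

theorem gaussianExpectation_monomialAError_mul_of_odd {T T' : Fin k → Finset (Fin n)} {v : Fin n}
    (hv : Odd (vertexDegree T v + vertexDegree T' v)) :
    gaussianExpectation n (monomialAError T * monomialAError T') = 0 := by
  rw [gaussianExpectation_monomialAError_mul_eq_sum]
  refine sum_eq_zero fun S _ => gaussianExpectation_monomialAError_mul_monomial_of_odd (v := v) ?_ _
  simpa only [← Nat.not_even_iff_odd, Nat.even_add, even_errorExponent_iff] using hv

theorem gaussianExpectation_monomialAError_mul_of_le_two {T T' : Fin k → Finset (Fin n)}
    {i : Fin k} (hi : ∀ v ∈ T i, vertexDegree T v + vertexDegree T' v ≤ 2) :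
    gaussianExpectation n (monomialAError T * monomialAError T') = 0 := by
  rw [gaussianExpectation_monomialAError_mul_eq_sum]
  refine sum_eq_zero fun S _ =>
    gaussianExpectation_monomialAError_mul_monomial_of_le_two (i := i) (fun v hv => ?_) _
  exact (Nat.add_le_add_left (errorExponent_le_vertexDegree T' S v) _).trans (hi v hv)

theorem isAdmissible_sumElim_of_gaussianExpectation_ne_zero {T T' : Fin k → Finset (Fin n)}
    (h : gaussianExpectation n (monomialAError T * monomialAError T') ≠ 0) :
    IsAdmissible (Sum.elim T T') := by
  have heven (v : Fin n) : Even (vertexDegree (Sum.elim T T') v) := by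
    by_contra hodd
    rw [vertexDegree_sumElim, Nat.not_even_iff_odd] at hodd
    exact h (gaussianExpectation_monomialAError_mul_of_odd hodd)
  have hlarge (j : Fin k ⊕ Fin k) :
      ∃ v ∈ Sum.elim T T' j, 2 < vertexDegree (Sum.elim T T') v := by
    by_contra! hle
    simp only [vertexDegree_sumElim] at hle
    rcases j with i | i
    · exact h (gaussianExpectation_monomialAError_mul_of_le_two (i := i) hle)
    · rw [mul_comm] at h
      refine h (gaussianExpectation_monomialAError_mul_of_le_two (i := i) fun v hv => ?_)
      rw [add_comm]
      exact hle v hv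
  refine ⟨fun v hv => ?_, fun j => ?_⟩
  · exact Nat.not_even_one (hv ▸ heven v)
  · obtain ⟨v, hv, h2⟩ := hlarge j
    obtain ⟨r, hr⟩ := heven v
    exact ⟨v, hv, by lia⟩

theorem errorExponent_le (T : Fin k → Finset (Fin n)) (S : Finset (Fin k)) (v : Fin n) :
    errorExponent T S v ≤ k :=
  (errorExponent_le_vertexDegree T S v).trans <| card_finset_fin_le _

theorem sum_errorExponent_le {T : Fin k → Finset (Fin n)} {d : ℕ} (hT : ∀ j, #(T j) ≤ d)
    (S : Finset (Fin k)) : ∑ v, errorExponent T S v ≤ k * d := by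
  calc ∑ v, errorExponent T S v ≤ ∑ v, vertexDegree T v :=
        sum_le_sum fun v _ => errorExponent_le_vertexDegree T S v
    _ = ∑ j, #(T j) := sum_vertexDegree T
    _ ≤ ∑ _j : Fin k, d := sum_le_sum fun j _ => hT j
    _ = k * d := by simp

theorem exists_abs_gaussianExpectation_monomialAError_mul_le (k d : ℕ) :
    ∃ B : ℝ, 0 < B ∧ ∀ (n : ℕ) (T T' : Fin k → Finset (Fin n)),
      (∀ j, #(T j) ≤ d) → (∀ j, #(T' j) ≤ d) →
        |gaussianExpectation n (monomialAError T * monomialAError T')| ≤ B := by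
  obtain ⟨R, hR1, hR⟩ := exists_abs_gaussianMoment_le_pow (k + k)
  refine ⟨2 ^ k * (2 ^ k * R ^ (k * d + k * d)), by positivity, fun n T T' hT hT' => ?_⟩
  have hterm (S S' : Finset (Fin k)) :
      |∏ v, gaussianMoment (errorExponent T S v + errorExponent T' S' v)|
        ≤ R ^ (k * d + k * d) := by
    refine (abs_prod_gaussianMoment_le_pow_sum hR fun v =>
      add_le_add (errorExponent_le T S v) (errorExponent_le T' S' v)).trans ?_
    rw [sum_add_distrib]
    gcongr
    exacts [sum_errorExponent_le hT S, sum_errorExponent_le hT' S']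
  have hinner (S' : Finset (Fin k)) :
      |gaussianExpectation n (monomialAError T * monomial (errorExponent T' S') ((-1) ^ #S'))|
        ≤ 2 ^ k * R ^ (k * d + k * d) := by
    rw [gaussianExpectation_monomialAError_mul_monomial, abs_mul, abs_neg_one_pow, one_mul]
    refine (abs_sum_le_sum_abs _ _).trans ?_
    simp only [abs_mul, abs_neg_one_pow, one_mul]
    refine (sum_le_card_nsmul _ _ _ fun S _ => hterm S S').trans_eq ?_
    simp
  rw [gaussianExpectation_monomialAError_mul_eq_sum]
  refine (abs_sum_le_sum_abs _ _).trans ?_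
  refine (sum_le_card_nsmul _ _ _ fun S' _ => hinner S').trans_eq ?_
  simp

theorem gaussL2_AError_sq {p : Fin k → MvPolynomial (Fin n) ℝ} (hp : ∀ j, IsMultilinear (p j)) :
    gaussL2 (AError p) ^ 2
      = ∑ U : Fin k ⊕ Fin k → Finset (Fin n),
          (∏ j, (Sum.elim p p j).coeff (setExponent (U j)))
            * gaussianExpectation n
                (monomialAError (U ∘ Sum.inl) * monomialAError (U ∘ Sum.inr)) := by
  rw [gaussL2_sq, sq, AError_eq_sum_smul_monomialAError hp, sum_mul_sum, ← Fintype.sum_prod_type',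
    map_sum, ← (Equiv.sumArrowEquivProdArrow _ _ _).sum_comp]
  refine sum_congr rfl fun U _ => ?_
  rw [smul_mul_smul_comm, map_smul, smul_eq_mul, Fintype.prod_sum_type]
  rfl

theorem exists_gaussL2_AError_sq_le (k d : ℕ) :
    ∃ B : ℝ, 0 < B ∧ ∀ (n : ℕ) (p : Fin k → MvPolynomial (Fin n) ℝ),
      (∀ j, IsMultilinear (p j)) → (∀ j, (p j).totalDegree ≤ d) →
        gaussL2 (AError p) ^ 2
          ≤ B * ∑ U : Fin k ⊕ Fin k → Finset (Fin n) with IsAdmissible U,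
              ∏ j, |(Sum.elim p p j).coeff (setExponent (U j))| := by
  obtain ⟨B, hB0, hB⟩ := exists_abs_gaussianExpectation_monomialAError_mul_le k d
  refine ⟨B, hB0, fun n p hp hdeg => ?_⟩
  rw [gaussL2_AError_sq hp, mul_sum, sum_filter]
  refine sum_le_sum fun U _ => ?_
  split_ifs with hU
  · rw [← abs_prod, mul_comm B]
    rcases eq_or_ne (∏ j, (Sum.elim p p j).coeff (setExponent (U j))) 0 with h0 | h0
    · simp [h0]
    have hdeg' (j : Fin k ⊕ Fin k) : (Sum.elim p p j).totalDegree ≤ d := by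
      rcases j with j | j <;> exact hdeg j
    have hcard (j : Fin k ⊕ Fin k) : #(U j) ≤ d :=
      (card_le_totalDegree_of_coeff_setExponent_ne_zero
        (prod_ne_zero_iff.1 h0 j (mem_univ j))).trans (hdeg' j)
    refine (le_abs_self _).trans ?_
    rw [abs_mul]
    gcongr
    exact hB n _ _ (fun j => hcard (Sum.inl j)) fun j => hcard (Sum.inr j)
  · have hzero : gaussianExpectation n
        (monomialAError (U ∘ Sum.inl) * monomialAError (U ∘ Sum.inr)) = 0 := by
      by_contra h
      have hadm := isAdmissible_sumElim_of_gaussianExpectation_ne_zero h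
      rw [Sum.elim_comp_inl_inr] at hadm
      exact hU hadm
    rw [hzero, mul_zero]

theorem exists_sum_isAdmissible_prod_abs_coeff_pow_four_le (κ : Type*) [Fintype κ] [DecidableEq κ]
    (d : ℕ) :
    ∃ K : ℝ, 0 < K ∧ ∀ (n : ℕ) (τ : ℝ), 0 ≤ τ → ∀ q : κ → MvPolynomial (Fin n) ℝ,
      (∀ j, IsMultilinear (q j)) → (∀ j, (q j).totalDegree ≤ d) → (∀ j, gaussL2 (q j) ≤ 1) →
      (∀ j v, influence v (q j) ≤ τ) →
        (∑ U : κ → Finset (Fin n) with IsAdmissible U, ∏ j, |(q j).coeff (setExponent (U j))|) ^ 4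
          ≤ (K * τ) ^ Fintype.card κ := by
  have hw2 : 0 < vertexWeight κ 2 := zero_lt_one.trans_le (one_le_vertexWeight 2)
  have hw4 : 0 < vertexWeight κ 4 := zero_lt_one.trans_le (one_le_vertexWeight 4)
  refine ⟨vertexWeight κ 4 ^ d * (vertexWeight κ 2 ^ d) ^ 2 * 2 ^ d, by positivity,
    fun n τ hτ q hq hdeg hnorm hinf => ?_⟩
  refine sum_isAdmissible_prod_pow_four_le
    (c := fun j s => |(q j).coeff (setExponent s)|) (fun j s => abs_nonneg _)
    (fun j s hs => ?_) (fun j => ?_) hτ fun j v => ?_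
  · exact (card_le_totalDegree_of_coeff_setExponent_ne_zero (abs_ne_zero.1 hs)).trans (hdeg j)
  · simp only [sq_abs]
    rw [← (hq j).gaussianExpectation_sq, ← gaussL2_sq]
    exact pow_le_one₀ (Real.sqrt_nonneg _) (hnorm j)
  · simp only [sq_abs]
    rw [← (hq j).influence_eq_sum]
    exact hinf j v

theorem rpow_div_four_pow_eight {x : ℝ} (hx : 0 ≤ x) (k : ℕ) :
    (x ^ ((k : ℝ) / 4)) ^ 8 = x ^ (2 * k) := by
  rw [← Real.rpow_natCast, ← Real.rpow_mul hx, ← Real.rpow_natCast]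
  push_cast
  ring_nf

end ErrorCovariance

/-- For all `k, d` there is `C` such that if `p₁, …, p_k` are multilinear of degree at most `d`
with `|p_j|₂ ≤ 1` and all influences at most `τ > 0`, then `|A(p₁, …, p_k)|₂ ≤ C τ^{k/4}`. -/
theorem A_bound_prop (k d : ℕ) (hk : 0 < k) (hd : 0 < d) :
    ∃ C : ℝ, 0 < C ∧
      ∀ (n : ℕ) (τ : ℝ), 0 < τ →
        ∀ p : Fin k → MvPolynomial (Fin n) ℝ,
          (∀ j, IsMultilinear (p j)) → (∀ j, (p j).totalDegree ≤ d) →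
          (∀ j, gaussL2 (p j) ≤ 1) → (∀ (i : Fin n) (j : Fin k), influence i (p j) ≤ τ) →
          gaussL2 (AError p) ≤ C * τ ^ ((k : ℝ) / 4) := by
  obtain ⟨B, hB, hAError⟩ := exists_gaussL2_AError_sq_le k d
  obtain ⟨K, hK, hsum⟩ := exists_sum_isAdmissible_prod_abs_coeff_pow_four_le (Fin k ⊕ Fin k) d
  refine ⟨√B * K ^ ((k : ℝ) / 4), by positivity, fun n τ hτ p hp hdeg hnorm hinf => ?_⟩
  have hcard : Fintype.card (Fin k ⊕ Fin k) = 2 * k := by simp [two_mul]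
  refine le_of_pow_le_pow_left₀ (n := 8) (by norm_num) (by positivity) ?_
  calc gaussL2 (AError p) ^ 8 = (gaussL2 (AError p) ^ 2) ^ 4 := by ring
    _ ≤ (B * ∑ U : Fin k ⊕ Fin k → Finset (Fin n) with IsAdmissible U,
          ∏ j, |(Sum.elim p p j).coeff (setExponent (U j))|) ^ 4 := by
        gcongr
        exact hAError n p hp hdeg
    _ ≤ B ^ 4 * (K * τ) ^ (2 * k) := by
        rw [mul_pow, ← hcard]
        gcongr
        exact hsum n τ hτ.le _ (Sum.forall.2 ⟨hp, hp⟩) (Sum.forall.2 ⟨hdeg, hdeg⟩)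
          (Sum.forall.2 ⟨hnorm, hnorm⟩) (Sum.forall.2 ⟨fun j v => hinf v j, fun j v => hinf v j⟩)
    _ = (√B * K ^ ((k : ℝ) / 4) * τ ^ ((k : ℝ) / 4)) ^ 8 := by
        rw [mul_pow K, mul_pow _ (τ ^ _), mul_pow √B, rpow_div_four_pow_eight hK.le,
          rpow_div_four_pow_eight hτ.le, mul_assoc, show √B ^ 8 = (√B ^ 2) ^ 4 by ring,
          Real.sq_sqrt hB.le]
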